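/- There is exactly one ℂ-linear derivation v : R → R such that A(v) = [[0,0,0],[−1,0,0],[0,0,0]], namely the derivation R_z determined on generators by v(a) = b, v(b) = 6a² − t₂/2, v(c) = a + t₁, v(t₁) = 0, v(t₂) = 0. -/

import Mathlib

/-!
Write `x = v(t₂)` and `y = Dt₃(v)`. The entries `A(v)₂₃` and `A(v)₃₃` vanish exactly when
`α(v) = 3t₃x − 2t₂y` and `DΔ(v) = −3t₂²x + 54t₃y` do. The determinant of this linear system in
`(x, y)` is `162t₃² − 6t₂³ = 6Δ`, a unit of `R`, so `x = y = 0`. Every correction term of the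
remaining entries is a multiple of `x` or `y`, and the equations collapse to `v(a) = b`,
`v(c) = a + t₁`, `v(t₁) = 0`, while `y = 0` becomes `(12a² − t₂)b = 2b·v(b)`, which gives `v(b)`
because `2b` is a unit. Conversely these values solve the system (`Amat_eq_iff`).

It remains to see that a derivation of `R` is the same thing as a choice of values on the five
generators. Uniqueness is the Leibniz rule applied to `x·s` with `s` in the multiplicative set
(`derivation_ext`). For existence (`exists_derivation`) a derivation is encoded as an algebra
section `r ↦ r + v(r)ε` of `R[ε] → R`: on the polynomial ring it is an evaluation map, and it
extends to the localization since an element of `R[ε]` is a unit as soon as its constant term is.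
-/

open MvPolynomial

noncomputable section

/-- The polynomial ring `ℂ[a,b,c,t₁,t₂]`. -/
abbrev Poly5 := MvPolynomial (Fin 5) ℂ

def aP : Poly5 := X 0
def bP : Poly5 := X 1
def cP : Poly5 := X 2
def t1P : Poly5 := X 3
def t2P : Poly5 := X 4
/-- `t₃ := 4a³ − t₂a − b²`. -/
def t3P : Poly5 := 4 * aP ^ 3 - t2P * aP - bP ^ 2
/-- `Δ := 27t₃² − t₂³`. -/
def ΔP : Poly5 := 27 * t3P ^ 2 - t2P ^ 3

/-- The multiplicative set generated by `a`, `b` and `Δ`. -/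
def Sloc : Submonoid Poly5 := Submonoid.closure {aP, bP, ΔP}

/-- `R` is the localization of `ℂ[a,b,c,t₁,t₂]` at the multiplicative set
generated by `a`, `b` and `Δ`. -/
abbrev Rloc := Localization Sloc

def a : Rloc := algebraMap Poly5 Rloc aP
def b : Rloc := algebraMap Poly5 Rloc bP
def c : Rloc := algebraMap Poly5 Rloc cP
def t1 : Rloc := algebraMap Poly5 Rloc t1P
def t2 : Rloc := algebraMap Poly5 Rloc t2P
def t3 : Rloc := algebraMap Poly5 Rloc t3P
def Δ : Rloc := algebraMap Poly5 Rloc ΔP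

/-- `g₁ := (−2a²t₂² + 3at₂t₃ + 9t₃²)/(4ab)`. -/
def g1 : Rloc := (-2 * a ^ 2 * t2 ^ 2 + 3 * a * t2 * t3 + 9 * t3 ^ 2) * Ring.inverse (4 * a * b)
/-- `g₂ := (18a²t₃ − at₂² − 3t₂t₃)/(2ab)`. -/
def g2 : Rloc := (18 * a ^ 2 * t3 - a * t2 ^ 2 - 3 * t2 * t3) * Ring.inverse (2 * a * b)
/-- `g₃ := (6a²t₂t₃ + (18t₃² − t₂³)a − t₂²t₃)/(8ab)`. -/
def g3 : Rloc :=
  (6 * a ^ 2 * t2 * t3 + (18 * t3 ^ 2 - t2 ^ 3) * a - t2 ^ 2 * t3) * Ring.inverse (8 * a * b)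

/-- `Dt₃(v) := (12a² − t₂)·v(a) − 2b·v(b) − a·v(t₂)`. -/
def Dt3 (v : Derivation ℂ Rloc Rloc) : Rloc :=
  (12 * a ^ 2 - t2) * v a - 2 * b * v b - a * v t2

/-- `α(v) := 3t₃·v(t₂) − 2t₂·Dt₃(v)`. -/
def αv (v : Derivation ℂ Rloc Rloc) : Rloc := 3 * t3 * v t2 - 2 * t2 * Dt3 v

/-- `DΔ(v) := 54t₃·Dt₃(v) − 3t₂²·v(t₂)`. -/
def DΔ (v : Derivation ℂ Rloc Rloc) : Rloc := 54 * t3 * Dt3 v - 3 * t2 ^ 2 * v t2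

/-- The Gauss–Manin connection matrix `A(v)` contracted with the derivation `v`. -/
def Amat (v : Derivation ℂ Rloc Rloc) : Matrix (Fin 3) (Fin 3) Rloc :=
  !![0, 0, 0;
     Ring.inverse Δ * (g1 * v t2 + g2 * Dt3 v
        - (c - b * Ring.inverse (2 * a)) * ((3 / 2 : ℂ) • αv v) - Δ * Ring.inverse b * v a),
     Ring.inverse Δ * (-((3 / 2 : ℂ) • (t1 * αv v)) - (1 / 12 : ℂ) • DΔ v),
     (3 / 2 : ℂ) • (Ring.inverse Δ * αv v);
     Ring.inverse Δ * ((t1 * g1 + g3) * v t2 + (t1 * g2 + g1) * Dt3 v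
        - (a + t1) * Δ * Ring.inverse b * v a
        - (c - b * Ring.inverse (2 * a)) * ((3 / 2 : ℂ) • (t1 * αv v) + (1 / 12 : ℂ) • DΔ v)
        + Δ * v c),
     Ring.inverse Δ * (Δ * v t1 - (1 / 6 : ℂ) • (t1 * DΔ v)
        - ((3 / 2 : ℂ) • t1 ^ 2 + (1 / 8 : ℂ) • t2) * αv v),
     Ring.inverse Δ * ((3 / 2 : ℂ) • (t1 * αv v) + (1 / 12 : ℂ) • DΔ v)]

/-! The inverses in the matrix are genuine: `a`, `b` and `Δ` are units of `R`. -/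

lemma isUnit_a : IsUnit a :=
  IsLocalization.map_units Rloc (⟨aP, Submonoid.subset_closure (by simp)⟩ : Sloc)

lemma isUnit_b : IsUnit b :=
  IsLocalization.map_units Rloc (⟨bP, Submonoid.subset_closure (by simp)⟩ : Sloc)

lemma isUnit_Δ : IsUnit Δ :=
  IsLocalization.map_units Rloc (⟨ΔP, Submonoid.subset_closure (by simp)⟩ : Sloc)

lemma Δ_eq : Δ = 27 * t3 ^ 2 - t2 ^ 3 := by
  simp only [Δ, ΔP, t3, t2, map_sub, map_mul, map_pow, map_ofNat]

lemma isUnit_ofNat (n : ℕ) [n.AtLeastTwo] : IsUnit (OfNat.ofNat n : Rloc) := by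
  have h : IsUnit (OfNat.ofNat n : ℂ) := isUnit_iff_ne_zero.2 (OfNat.ofNat_ne_zero n)
  simpa only [map_ofNat] using h.map (algebraMap ℂ Rloc)

lemma derivation_ext {v w : Derivation ℂ Rloc Rloc} (ha : v a = w a) (hb : v b = w b)
    (hc : v c = w c) (h1 : v t1 = w t1) (h2 : v t2 = w t2) : v = w := by
  have hP : v.compAlgebraMap Poly5 = w.compAlgebraMap Poly5 := by
    refine MvPolynomial.derivation_ext fun i => ?_
    fin_cases i
    exacts [ha, hb, hc, h1, h2]
  have hP' (p : Poly5) : v (algebraMap Poly5 Rloc p) = w (algebraMap Poly5 Rloc p) :=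
    DFunLike.congr_fun hP p
  ext x
  obtain ⟨⟨p, s⟩, h⟩ := IsLocalization.surj Sloc x
  have hv := congrArg v h
  have hw := congrArg w h
  rw [Derivation.leibniz] at hv hw
  simp only [smul_eq_mul, hP'] at hv hw
  exact (IsLocalization.map_units Rloc s).mul_left_cancel
    (add_left_cancel (hv.trans hw.symm))

/-- A derivation of `R` can be prescribed arbitrarily on the generators: the `ε`-part of the
algebra map `R → R[ε]` that sends each generator `Xᵢ` to `Xᵢ + dᵢ ε`. -/
lemma exists_derivation (d : Fin 5 → Rloc) :
    ∃ v : Derivation ℂ Rloc Rloc, ∀ i, v (algebraMap Poly5 Rloc (X i)) = d i := by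
  let f : Poly5 →ₐ[ℂ] DualNumber Rloc :=
    aeval fun i => TrivSqZeroExt.inl (algebraMap Poly5 Rloc (X i)) + TrivSqZeroExt.inr (d i)
  have hf : (TrivSqZeroExt.fstHom ℂ Rloc Rloc).comp f = IsScalarTower.toAlgHom ℂ Poly5 Rloc := by
    refine MvPolynomial.algHom_ext fun i => ?_
    simp [f]
  have hf' (p : Poly5) : (f p).fst = algebraMap Poly5 Rloc p := DFunLike.congr_fun hf p
  have hu (s : Sloc) : IsUnit (f s) := by
    rw [TrivSqZeroExt.isUnit_iff_isUnit_fst, hf']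
    exact IsLocalization.map_units Rloc s
  let F : Rloc →ₐ[ℂ] DualNumber Rloc :=
    IsLocalization.liftAlgHom (A := ℂ) (S := Rloc) (P := DualNumber Rloc) (M := Sloc) (f := f) hu
  have hF (p : Poly5) : F (algebraMap Poly5 Rloc p) = f p := IsLocalization.lift_eq hu p
  have hfst (x : Rloc) : (F x).fst = x := by
    have : ((TrivSqZeroExt.fstHom ℂ Rloc Rloc).comp F : Rloc →+* Rloc) = RingHom.id Rloc := by
      refine IsLocalization.ringHom_ext Sloc (RingHom.ext fun p => ?_)
      exact (congrArg TrivSqZeroExt.fst (hF p)).trans (hf' p)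
    exact DFunLike.congr_fun this x
  refine ⟨Derivation.mk' ((TrivSqZeroExt.sndHom Rloc Rloc).restrictScalars ℂ ∘ₗ F.toLinearMap)
    fun x y => ?_, fun i => ?_⟩
  · simp [hfst, mul_comm]
  · exact (congrArg TrivSqZeroExt.snd (hF (X i))).trans (by simp [f])

/-- The linear system `α(v) = DΔ(v) = 0` in `(v(t₂), Dt₃(v))` has determinant `6Δ`. -/
lemma eq_zero_of_αv_DΔ {v : Derivation ℂ Rloc Rloc} (hα : αv v = 0) (hD : DΔ v = 0) :
    v t2 = 0 ∧ Dt3 v = 0 := by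
  have h6 : IsUnit (6 * Δ) := (isUnit_ofNat 6).mul isUnit_Δ
  unfold αv at hα
  unfold DΔ at hD
  constructor
  -- each coordinate is isolated by a row of the adjugate matrix
  · refine h6.mul_right_eq_zero.1 ?_
    rw [Δ_eq]
    linear_combination 54 * t3 * hα + 2 * t2 * hD
  · refine h6.mul_right_eq_zero.1 ?_
    rw [Δ_eq]
    linear_combination 3 * t2 ^ 2 * hα + 3 * t3 * hD

lemma values_of_Amat_eq {v : Derivation ℂ Rloc Rloc}
    (h : Amat v = !![0, 0, 0; -1, 0, 0; 0, 0, 0]) :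
    v a = b ∧ v b = 6 * a ^ 2 - (1 / 2 : ℂ) • t2 ∧ v c = a + t1 ∧ v t1 = 0 ∧ v t2 = 0 := by
  have hΔ := Ring.inverse_mul_cancel Δ isUnit_Δ
  have hb := Ring.inverse_mul_cancel b isUnit_b
  have hΔi : IsUnit (Ring.inverse Δ) := isUnit_Δ.ringInverse
  have e21 := congrFun (congrFun h 1) 0
  have e23 := congrFun (congrFun h 1) 2
  have e31 := congrFun (congrFun h 2) 0
  have e32 := congrFun (congrFun h 2) 1
  have e33 := congrFun (congrFun h 2) 2
  simp only [Amat, Matrix.of_apply, Matrix.cons_val] at e21 e23 e31 e32 e33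
  have hα : αv v = 0 := by
    rw [smul_eq_zero_iff_right (by norm_num)] at e23
    exact hΔi.mul_right_eq_zero.1 e23
  have hD : DΔ v = 0 := by
    rw [hΔi.mul_right_eq_zero, hα, mul_zero, smul_zero, zero_add,
      smul_eq_zero_iff_right (by norm_num)] at e33
    exact e33
  obtain ⟨ht2, hy⟩ := eq_zero_of_αv_DΔ hα hD
  simp only [hα, hD, ht2, hy, mul_zero, smul_zero, sub_zero, add_zero, zero_sub]
    at e21 e31 e32
  have hva : v a = b := by
    linear_combination (-b) * e21 - v a * Δ * Ring.inverse Δ * hb - v a * hΔ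
  refine ⟨hva, ?_, ?_, ?_, ht2⟩
  · have h2 : IsUnit (2 * b) := (isUnit_ofNat 2).mul isUnit_b
    have half : 2 * ((1 / 2 : ℂ) • t2) = t2 := by
      rw [mul_smul_comm, two_mul, ← two_smul ℂ, smul_smul]; norm_num
    refine h2.mul_left_cancel ?_
    unfold Dt3 at hy
    rw [hva, ht2] at hy
    linear_combination -hy + b * half
  · have := hΔi.mul_right_eq_zero.1 e31
    rw [hva] at this
    refine isUnit_Δ.mul_left_cancel ?_
    linear_combination this + (a + t1) * Δ * hb
  · exact isUnit_Δ.mul_right_eq_zero.1 (hΔi.mul_right_eq_zero.1 e32)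

lemma Amat_eq_of_values {v : Derivation ℂ Rloc Rloc} (ha : v a = b)
    (hb : v b = 6 * a ^ 2 - (1 / 2 : ℂ) • t2) (hc : v c = a + t1) (h1 : v t1 = 0)
    (h2 : v t2 = 0) : Amat v = !![0, 0, 0; -1, 0, 0; 0, 0, 0] := by
  have hΔ := Ring.inverse_mul_cancel Δ isUnit_Δ
  have hbi := Ring.inverse_mul_cancel b isUnit_b
  have hy : Dt3 v = 0 := by
    have half : 2 * ((1 / 2 : ℂ) • t2) = t2 := by
      rw [mul_smul_comm, two_mul, ← two_smul ℂ, smul_smul]; norm_num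
    unfold Dt3
    rw [ha, hb, h2]
    linear_combination b * half
  have hα : αv v = 0 := by simp [αv, hy, h2]
  have hD : DΔ v = 0 := by simp [DΔ, hy, h2]
  have e21 : Ring.inverse Δ * -(Δ * Ring.inverse b * b) = -1 := by
    linear_combination -Ring.inverse Δ * Δ * hbi - hΔ
  have e31 : -((a + t1) * Δ * Ring.inverse b * b) + Δ * (a + t1) = 0 := by
    linear_combination -(a + t1) * Δ * hbi
  simp only [Amat, hα, hD, hy, ha, hc, h1, h2, mul_zero, smul_zero, sub_zero, add_zero,
    zero_sub, neg_zero, e21, e31]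

/-- The matrix equation characterises the values of `R_z` on the generators. -/
lemma Amat_eq_iff {v : Derivation ℂ Rloc Rloc} :
    Amat v = !![0, 0, 0; -1, 0, 0; 0, 0, 0] ↔
      v a = b ∧ v b = 6 * a ^ 2 - (1 / 2 : ℂ) • t2 ∧ v c = a + t1 ∧ v t1 = 0 ∧ v t2 = 0 :=
  ⟨values_of_Amat_eq, fun ⟨ha, hb, hc, h1, h2⟩ => Amat_eq_of_values ha hb hc h1 h2⟩

/-- There is exactly one ℂ-linear derivation `v : R → R` with
`A(v) = [[0,0,0],[−1,0,0],[0,0,0]]`, namely the modular vector field `R_z` determined on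
generators by the displayed values. -/
theorem statement4 :
    (∃! v : Derivation ℂ Rloc Rloc, Amat v = !![0, 0, 0; -1, 0, 0; 0, 0, 0]) ∧
    (∀ v : Derivation ℂ Rloc Rloc, Amat v = !![0, 0, 0; -1, 0, 0; 0, 0, 0] →
      (v a = b ∧
       v b = 6 * a ^ 2 - (1 / 2 : ℂ) • t2 ∧
       v c = a + t1 ∧
       v t1 = 0 ∧
       v t2 = 0)) := by
  refine ⟨?_, fun v h => Amat_eq_iff.1 h⟩
  obtain ⟨v, hv⟩ := exists_derivation ![b, 6 * a ^ 2 - (1 / 2 : ℂ) • t2, a + t1, 0, 0]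
  have hA : Amat v = !![0, 0, 0; -1, 0, 0; 0, 0, 0] :=
    Amat_eq_iff.2 ⟨hv 0, hv 1, hv 2, hv 3, hv 4⟩
  refine ⟨v, hA, fun w hw => ?_⟩
  obtain ⟨ha, hb, hc, h1, h2⟩ := Amat_eq_iff.1 hA
  obtain ⟨ha', hb', hc', h1', h2'⟩ := Amat_eq_iff.1 hw
  exact derivation_ext (ha'.trans ha.symm) (hb'.trans hb.symm) (hc'.trans hc.symm)
    (h1'.trans h1.symm) (h2'.trans h2.symm)

end
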